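/- For every set A ⊆ [0,1), the Hausdorff dimension of A equals the minimum over all separator enumerators f of the f-enumerator finite-state dimension of A: dim_H(A) = min_f dim_FS^f(A). Moreover the minimum is attained by some f : {0,1}* → D_2 mapping into the dyadic rationals. -/

import Mathlib

open Filter Set
open scoped ENNReal

/-- A finite-state transducer over alphabet `A`, with states `Fin n`. -/
structure FST (A : Type) where
  n : ℕ
  tr : Fin n → A → Fin n
  out1 : Fin n → A → List A
  q0 : Fin n

/-- Extension of the transition function to strings. -/
def FST.deltaS {A : Type} (T : FST A) : Fin T.n → List A → Fin T.n
  | q, [] => q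
  | q, a :: w => T.deltaS (T.tr q a) w

/-- Extension of the output function to strings. -/
def FST.nuS {A : Type} (T : FST A) : Fin T.n → List A → List A
  | _, [] => []
  | q, a :: w => T.out1 q a ++ T.nuS (T.tr q a) w

/-- The output of `T` on input `w`. -/
def FST.out {A : Type} (T : FST A) (w : List A) : List A := T.nuS T.q0 w

/-- `T`-information content of a string: shortest input producing it (`⊤` if none). -/
noncomputable def Kfst {A : Type} (T : FST A) (w : List A) : ℕ∞ :=
  sInf {k : ℕ∞ | ∃ π : List A, T.out π = w ∧ (π.length : ℕ∞) = k}

/-- The real number in `[0,1)` with finite base-`b` expansion `w`. -/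
noncomputable def realb (b : ℕ) (w : List (Fin b)) : ℝ :=
  ∑ i : Fin w.length, (w.get i : ℝ) / (b : ℝ) ^ (i.1 + 1)

/-- The real number with base-`b` expansion `S`. -/
noncomputable def realSeq (b : ℕ) (S : ℕ → Fin b) : ℝ :=
  ∑' i : ℕ, (S i : ℝ) / (b : ℝ) ^ (i + 1)

/-- The length-`n` prefix of a sequence, as a string. -/
def pre {A : Type} (S : ℕ → A) (n : ℕ) : List A := List.ofFn (fun i : Fin n => S i.1)

/-- Base-`b` `T`-information content of `x` at precision `δ`. -/
noncomputable def Kprec (b : ℕ) (T : FST (Fin b)) (δ : ℝ) (x : ℝ) : ℕ∞ :=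
  sInf {k : ℕ∞ | ∃ w : List (Fin b), |realb b w - x| < δ ∧ Kfst T w = k}

/-- Base-`b` finite-state dimension of a point of `[0,1)`. -/
noncomputable def dimFSb (b : ℕ) (x : ℝ) : ℝ≥0∞ :=
  ⨅ T : FST (Fin b),
    Filter.liminf (fun δ : ℝ =>
      (Kprec b T δ x : ℝ≥0∞) / ENNReal.ofReal (Real.logb b (1/δ)))
      (nhdsWithin 0 (Set.Ioi 0))

/-- Base-`b` finite-state dimension of a subset of `[0,1)`. -/
noncomputable def dimFSbSet (b : ℕ) (A : Set ℝ) : ℝ≥0∞ :=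
  ⨅ T : FST (Fin b), ⨆ x ∈ A,
    Filter.liminf (fun δ : ℝ =>
      (Kprec b T δ x : ℝ≥0∞) / ENNReal.ofReal (Real.logb b (1/δ)))
      (nhdsWithin 0 (Set.Ioi 0))

/-- Finite-state dimension of a sequence (Doty–Moser characterization). -/
noncomputable def dimFSseq {A : Type} (S : ℕ → A) : ℝ≥0∞ :=
  ⨅ T : FST A,
    Filter.liminf (fun n : ℕ => (Kfst T (pre S n) : ℝ≥0∞) / (n : ℝ≥0∞)) Filter.atTop

/-- Finite-state dimension of a set of sequences. -/
noncomputable def dimFSseqSet {A : Type} (X : Set (ℕ → A)) : ℝ≥0∞ :=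
  ⨅ T : FST A, ⨆ S ∈ X,
    Filter.liminf (fun n : ℕ => (Kfst T (pre S n) : ℝ≥0∞) / (n : ℝ≥0∞)) Filter.atTop

/-- digit complement of a sequence -/
def compSeq (b : ℕ) (S : ℕ → Fin b) : ℕ → Fin b :=
  fun i => ⟨b - 1 - (S i : ℕ), by have := (S i).isLt; omega⟩

/-- `S` ends with infinitely many digits `b-1`. -/
def endsBm1 (b : ℕ) (S : ℕ → Fin b) : Prop := ∃ N, ∀ i ≥ N, (S i : ℕ) = b - 1

/-- A separator enumerator: a map into `[0,1)` with dense image in `[0,1]`. -/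
def isSE {A : Type} (f : List A → ℝ) : Prop :=
  (∀ w, f w ∈ Set.Ico (0:ℝ) 1) ∧ ∀ y ∈ Set.Icc (0:ℝ) 1, y ∈ closure (Set.range f)

/-- `f`-`T`-information content of `x` at precision `δ`. -/
noncomputable def KprecF {A : Type} (T : FST A) (f : List A → ℝ) (δ : ℝ) (x : ℝ) : ℕ∞ :=
  sInf {k : ℕ∞ | ∃ w : List A, |f w - x| < δ ∧ Kfst T w = k}

/-- `f`-enumerator finite-state dimension of a point. -/
noncomputable def dimFSf {A : Type} [Fintype A] (f : List A → ℝ) (x : ℝ) : ℝ≥0∞ :=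
  ⨅ T : FST A,
    Filter.liminf (fun δ : ℝ =>
      (KprecF T f δ x : ℝ≥0∞) / ENNReal.ofReal (Real.logb (Fintype.card A) (1/δ)))
      (nhdsWithin 0 (Set.Ioi 0))

/-- `f`-enumerator finite-state dimension of a set. -/
noncomputable def dimFSfSet {A : Type} [Fintype A] (f : List A → ℝ) (E : Set ℝ) : ℝ≥0∞ :=
  ⨅ T : FST A, ⨆ x ∈ E,
    Filter.liminf (fun δ : ℝ =>
      (KprecF T f δ x : ℝ≥0∞) / ENNReal.ofReal (Real.logb (Fintype.card A) (1/δ)))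
      (nhdsWithin 0 (Set.Ioi 0))

open scoped Classical in
/-- Number of occurrences of `w` among the first `N` positions of `S`. -/
noncomputable def occCount {b : ℕ} (S : ℕ → Fin b) (w : List (Fin b)) (N : ℕ) : ℕ :=
  (Finset.range N).filter (fun i => ∀ j : Fin w.length, S (i + j.1) = w.get j) |>.card

/-!
Lower bound: if every point of `A` has dimension `< s` through a transducer `T`, then every point of
`A` outside the countable set of values `f (T.out π)` lies in infinitely many of the balls centred
at `f (T.out π)` with radius about `b ^ (-|π| / s)`, where `b` is the number of letters. There are
`b ^ n` inputs of length `n`, so the sum of the `t`-th powers of the radii is finite for `t > s`,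
and a Borel–Cantelli argument for Hausdorff measure gives `dimH A ≤ t`.

Upper bound: take exponents `s k` decreasing to `dimH A`, and for each `k` a cover of `A` by balls
of radius `< 1 / k`, such that over all covers together `∑ r ^ s ≤ 1`. This is Kraft's inequality
for codewords of length `⌈s * log_b (1 / r)⌉`, so some `f` enumerates the centre of each ball at a
word of about that length, and with this `f` copying the input is already optimal. One further
letter, which tells the codewords from the words on which `f` is the given enumerator `g`,
keeps the range of `f` equal to that of `g`.
-/

open MeasureTheory Metric
open scoped Topology NNReal

section Hausdorff

variable {X : Type*} [EMetricSpace X] [MeasurableSpace X] [BorelSpace X] {s : ℝ}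

theorem hausdorffMeasure_limsup_cofinite_eq_zero {ι : Type*} [Countable ι] (hs : 0 < s)
    {t : ι → Set X} (ht : ∑' i, ediam (t i) ^ s ≠ ∞) : μH[s] (limsup t cofinite) = 0 := by
  have htail := ENNReal.tendsto_tsum_compl_atTop_zero ht
  have hroot : Tendsto (fun F : Finset ι ↦ (∑' i : {i // i ∉ F}, ediam (t i) ^ s) ^ s⁻¹)
      atTop (𝓝 0) := by
    simpa [hs] using htail.ennrpow_const s⁻¹
  have hdiam (F : Finset ι) (i : {i // i ∉ F}) :
      ediam (t i) ≤ (∑' i : {i // i ∉ F}, ediam (t i) ^ s) ^ s⁻¹ :=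
    (ENNReal.le_rpow_inv_iff hs).2 (ENNReal.le_tsum i)
  have hcover (F : Finset ι) : limsup t cofinite ⊆ ⋃ i : {i // i ∉ F}, t i := fun x hx ↦ by
    obtain ⟨i, hxi, hiF⟩ := ((mem_limsup_iff_frequently_mem.1 hx).and_eventually
      F.finite_toSet.eventually_cofinite_notMem).exists
    exact mem_iUnion.2 ⟨⟨i, hiF⟩, hxi⟩
  have hle := Measure.hausdorffMeasure_le_liminf_tsum s _ _ hroot
    (fun F (i : {i // i ∉ F}) ↦ t i) (.of_forall hdiam) (.of_forall hcover)
  exact le_antisymm (hle.trans_eq htail.liminf_eq) zero_le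

theorem exists_cover_tsum_ediam_rpow_lt (hs : 0 < s) {A : Set X} (hA : μH[s] A = 0) {ε : ℝ≥0∞}
    (hε : ε ≠ 0) : ∃ t : ℕ → Set X, A ⊆ ⋃ n, t n ∧ ∑' n, ediam (t n) ^ s < ε := by
  have hinf : (⨅ (t : ℕ → Set X) (_ : A ⊆ ⋃ n, t n) (_ : ∀ n, ediam (t n) ≤ 1),
      ∑' n, ⨆ _ : (t n).Nonempty, ediam (t n) ^ s) ≤ μH[s] A := by
    rw [Measure.hausdorffMeasure_apply]
    exact le_iSup₂_of_le 1 one_pos le_rfl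
  have hlt := hinf.trans_lt (hA.trans_lt (pos_iff_ne_zero.2 hε))
  simp only [iInf_lt_iff] at hlt
  obtain ⟨t, hAt, -, hsum⟩ := hlt
  refine ⟨t, hAt, (ENNReal.tsum_le_tsum fun n ↦ ?_).trans_lt hsum⟩
  obtain h | h := (t n).eq_empty_or_nonempty <;> simp [h, hs]

theorem exists_radius_tsum_rpow_lt {ι : Type*} [Countable ι] (hs : 0 < s) {d : ι → ℝ≥0∞}
    {ε : ℝ≥0∞} (hd : ∑' i, d i ^ s < ε) :
    ∃ r : ι → ℝ≥0, (∀ i, d i < r i) ∧ ∑' i, (r i : ℝ≥0∞) ^ s < ε := by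
  obtain ⟨e, he, hesum⟩ :=
    ENNReal.exists_pos_sum_of_countable' (tsub_pos_of_lt hd).ne' ι
  have hr (i : ι) : ∃ r : ℝ≥0, d i < r ∧ (r : ℝ≥0∞) < (d i ^ s + e i) ^ s⁻¹ := by
    refine ENNReal.lt_iff_exists_nnreal_btwn.1 ((ENNReal.lt_rpow_inv_iff hs).2 ?_)
    exact ENNReal.lt_add_right (ENNReal.ne_top_of_tsum_ne_top hd.ne_top i) (he i).ne'
  choose r hdr hre using hr
  refine ⟨r, hdr, ?_⟩
  calc ∑' i, (r i : ℝ≥0∞) ^ s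
      ≤ ∑' i, (d i ^ s + e i) :=
        ENNReal.tsum_le_tsum fun i ↦ ((ENNReal.lt_rpow_inv_iff hs).1 (hre i)).le
    _ = ∑' i, d i ^ s + ∑' i, e i := ENNReal.tsum_add
    _ < ε := lt_tsub_iff_left.1 hesum

theorem exists_ball_cover_tsum_rpow_lt {κ : Type*} [Nonempty κ] {g : κ → X} {A : Set X}
    (hg : A ⊆ closure (range g)) (hs : 0 < s) (hA : μH[s] A = 0) {ε δ : ℝ≥0∞}
    (hε : ε ≠ 0) (hδ : δ ≠ 0) :
    ∃ (c : ℕ → κ) (r : ℕ → ℝ≥0), (∀ n, 0 < r n ∧ r n < δ) ∧ ∑' n, (r n : ℝ≥0∞) ^ s < ε ∧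
      ∀ x ∈ A, ∃ n, edist (g (c n)) x < r n := by
  have hmin : min ε (δ ^ s) ≠ 0 := (lt_min (pos_iff_ne_zero.2 hε)
    (ENNReal.rpow_pos_of_nonneg (pos_iff_ne_zero.2 hδ) hs.le)).ne'
  obtain ⟨t, hAt, ht⟩ := exists_cover_tsum_ediam_rpow_lt hs hA hmin
  obtain ⟨r, htr, hr⟩ := exists_radius_tsum_rpow_lt hs ht
  have hcenter (n : ℕ) : ∃ c : κ, ∀ x ∈ A ∩ t n, edist (g c) x < r n := by
    obtain hempty | ⟨y, hyA, hyt⟩ := (A ∩ t n).eq_empty_or_nonempty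
    · simp [hempty]
    obtain ⟨_, ⟨c, rfl⟩, hc⟩ := EMetric.mem_closure_iff.1 (hg hyA) _ (tsub_pos_of_lt (htr n))
    refine ⟨c, fun x hx ↦ ?_⟩
    calc edist (g c) x ≤ edist y (g c) + edist y x := edist_triangle_left _ _ _
      _ ≤ edist y (g c) + ediam (t n) := by gcongr; exact edist_le_ediam_of_mem hyt hx.2
      _ < r n := lt_tsub_iff_right.1 hc
  choose c hc using hcenter
  refine ⟨c, r, fun n ↦ ⟨?_, ?_⟩, hr.trans_le (min_le_left _ _), fun x hx ↦ ?_⟩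
  · exact_mod_cast zero_le.trans_lt (htr n)
  · exact (ENNReal.rpow_lt_rpow_iff hs).1
      ((ENNReal.le_tsum n).trans_lt (hr.trans_le (min_le_right _ _)))
  · obtain ⟨n, hn⟩ := mem_iUnion.1 (hAt hx)
    exact ⟨n, hc n x ⟨hx, hn⟩⟩

end Hausdorff

section FineCovers

variable {X : Type*} [EMetricSpace X]

theorem exists_fine_ball_covers {κ : Type*} [Nonempty κ] {g : κ → X} {A : Set X}
    (hg : A ⊆ closure (range g)) (hA : dimH A ≠ ∞) :
    ∃ (s : ℕ → ℝ≥0) (c : ℕ × ℕ → κ) (r : ℕ × ℕ → ℝ≥0),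
      Tendsto (fun k ↦ (s k : ℝ≥0∞)) atTop (𝓝 (dimH A)) ∧
      (∀ i, 0 < r i ∧ (r i : ℝ≥0∞) < (i.1 : ℝ≥0∞)⁻¹) ∧
      ∑' i, (r i : ℝ≥0∞) ^ (s i.1 : ℝ) ≤ 1 ∧
      ∀ x ∈ A, ∀ k, ∃ n, edist (g (c (k, n))) x < r (k, n) := by
  borelize X
  lift dimH A to ℝ≥0 using hA with d hd
  obtain ⟨s, -, hds, hs⟩ := exists_seq_strictAnti_tendsto d
  have hμ (k : ℕ) : μH[s k] A = 0 :=
    hausdorffMeasure_of_dimH_lt (by rw [← hd]; exact_mod_cast hds k)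
  obtain ⟨ε, hε, hεsum⟩ := ENNReal.exists_pos_sum_of_countable' one_ne_zero ℕ
  choose c r hr hrsum hcover using fun k ↦ exists_ball_cover_tsum_rpow_lt hg
    (NNReal.coe_pos.2 (pos_of_gt (hds k))) (hμ k) (hε k).ne'
    (ENNReal.inv_ne_zero.2 (ENNReal.natCast_ne_top k))
  refine ⟨s, fun i ↦ c i.1 i.2, fun i ↦ r i.1 i.2, ENNReal.tendsto_coe.2 hs, fun i ↦ hr i.1 i.2,
    ?_, fun x hx k ↦ hcover k x hx⟩
  calc ∑' i : ℕ × ℕ, (r i.1 i.2 : ℝ≥0∞) ^ (s i.1 : ℝ)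
      = ∑' k, ∑' n, (r k n : ℝ≥0∞) ^ (s k : ℝ) := ENNReal.tsum_prod'
    _ ≤ ∑' k, ε k := ENNReal.tsum_le_tsum fun k ↦ (hrsum k).le
    _ ≤ 1 := hεsum.le

end FineCovers

section Words

variable {σ ι : Type*} [Fintype σ]

theorem enatCard_list_length_eq (n : ℕ) :
    ENat.card {w : List σ // w.length = n} = Fintype.card σ ^ n := by
  change ENat.card (List.Vector σ n) = _
  simp

theorem tsum_list_length (g : ℕ → ℝ≥0∞) :
    ∑' w : List σ, g w.length = ∑' n, (Fintype.card σ : ℝ≥0∞) ^ n * g n := by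
  rw [← (Equiv.sigmaFiberEquiv (List.length : List σ → ℕ)).tsum_eq, ENNReal.tsum_sigma']
  refine tsum_congr fun n ↦ ?_
  calc ∑' w : {w : List σ // w.length = n}, g w.1.length
      = ∑' _ : {w : List σ // w.length = n}, g n := tsum_congr fun w ↦ by rw [w.2]
    _ = (Fintype.card σ : ℝ≥0∞) ^ n * g n := by simp [enatCard_list_length_eq]

theorem exists_injective_length_eq_of_kraft {L : ι → ℕ}
    (hL : ∑' i, (Fintype.card σ : ℝ≥0∞)⁻¹ ^ L i ≤ 1) :
    ∃ code : ι → List σ, Function.Injective code ∧ ∀ i, (code i).length = L i := by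
  have hfiber (n : ℕ) : Nonempty ({i // L i = n} ↪ List.Vector σ n) := by
    have hmass : (ENat.card {i // L i = n} : ℝ≥0∞) * (Fintype.card σ : ℝ≥0∞)⁻¹ ^ n ≤ 1 :=
      calc (ENat.card {i // L i = n} : ℝ≥0∞) * (Fintype.card σ : ℝ≥0∞)⁻¹ ^ n
          = ∑' i : {i // L i = n}, (Fintype.card σ : ℝ≥0∞)⁻¹ ^ L i := by
            rw [← ENNReal.tsum_const]
            exact tsum_congr fun i ↦ by rw [i.2]
        _ ≤ ∑' i, (Fintype.card σ : ℝ≥0∞)⁻¹ ^ L i :=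
          ENNReal.tsum_comp_le_tsum_of_injective Subtype.val_injective _
        _ ≤ 1 := hL
    have hcard : ENat.card {i // L i = n} ≤ (Fintype.card σ ^ n : ℕ) := by
      rw [← ENNReal.inv_pow, ← div_eq_mul_inv, ENNReal.div_le_iff_le_mul (by simp) (by simp),
        one_mul] at hmass
      exact_mod_cast hmass
    have : Finite {i // L i = n} := ENat.card_lt_top.1 (hcard.trans_lt (ENat.natCast_lt_top _))
    have := Fintype.ofFinite {i // L i = n}
    refine Function.Embedding.nonempty_of_card_le ?_
    rw [card_vector]
    exact_mod_cast (ENat.card_eq_coe_fintype_card (α := {i // L i = n})) ▸ hcard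
  let e (n : ℕ) : {i // L i = n} ↪ {w : List σ // w.length = n} := (hfiber n).some
  let code := Equiv.sigmaFiberEquiv List.length ∘ Sigma.map id (fun n ↦ e n) ∘
    (Equiv.sigmaFiberEquiv L).symm
  have hcode : Function.Injective code :=
    (Equiv.injective _).comp <|
      (Function.injective_id.sigma_map fun n ↦ (e n).injective).comp (Equiv.injective _)
  exact ⟨code, hcode, fun i ↦ (e (L i) ⟨i, rfl⟩).2⟩

theorem exists_surjective_apply_eq_of_kraft [Nontrivial σ] {L : ι → ℕ}
    (hL : ∑' i, (Fintype.card σ : ℝ≥0∞)⁻¹ ^ L i ≤ 1) (c : ι → List σ) :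
    ∃ φ : List σ → List σ, Function.Surjective φ ∧ ∀ i, ∃ w, φ w = c i ∧ w.length = L i + 1 := by
  obtain ⟨code, hcode, hlength⟩ := exists_injective_length_eq_of_kraft hL
  obtain ⟨a, b, hab⟩ := exists_pair_ne σ
  -- The first letter is a flag: `a` marks words decoded verbatim, which makes `φ` surjective.
  let e : List σ ⊕ ι → List σ := Sum.elim (a :: ·) (fun i ↦ b :: code i)
  have he : Function.Injective e := by
    refine List.cons_injective.sumElim (List.cons_injective.comp hcode) fun w i h ↦ ?_
    exact hab (List.cons_eq_cons.1 h).1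
  let φ := Function.extend e (Sum.elim id c) id
  have hφ (z : List σ ⊕ ι) : φ (e z) = Sum.elim id c z := he.extend_apply _ _ z
  exact ⟨φ, fun w ↦ ⟨e (.inl w), hφ _⟩, fun i ↦ ⟨e (.inr i), hφ _, by simp [e, hlength]⟩⟩

end Words

section LowerBound

/-- The `f`-enumerator dimension of the point `x` measured through the single transducer `T`:
`dimFSf f x` is its infimum over `T`, and `dimFSfSet f A` takes the supremum over `x ∈ A` first. -/
noncomputable def dimFSfVia {σ : Type} [Fintype σ] (T : FST σ) (f : List σ → ℝ) (x : ℝ) : ℝ≥0∞ :=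
  liminf (fun δ : ℝ ↦
    (KprecF T f δ x : ℝ≥0∞) / ENNReal.ofReal (Real.logb (Fintype.card σ) (1 / δ))) (𝓝[>] 0)

/-- The ratio `ρ` for which a word of length `n ≤ s * log_b (1 / δ)` describes a point to precision
`δ ≤ ρ ^ n`. The `max 2` keeps this true for `b ≤ 1`, where `Real.logb b` is constantly `0`. -/
noncomputable def radiusRatio (b : ℕ) (s : ℝ≥0) : ℝ≥0∞ := max 2 (b : ℝ≥0∞) ^ (-(s : ℝ)⁻¹)

variable {X : Type*} [EMetricSpace X] {σ : Type} [Fintype σ] {T : FST σ} {f : List σ → ℝ}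
  {x δ : ℝ} {s t : ℝ≥0}

theorem dimH_limsup_eball_pow_length_le (y : List σ → X) {p : ℝ≥0∞} (ht : 0 < t)
    (hp : Fintype.card σ * p ^ (t : ℝ) < 1) :
    dimH (limsup (fun π ↦ eball (y π) (p ^ π.length)) cofinite) ≤ t := by
  borelize X
  refine dimH_le_of_hausdorffMeasure_ne_top (ne_of_eq_of_ne
    (hausdorffMeasure_limsup_cofinite_eq_zero (NNReal.coe_pos.2 ht) (ne_top_of_le_ne_top ?_
      (ENNReal.tsum_le_tsum fun π ↦ ENNReal.rpow_le_rpow ediam_eball_le t.coe_nonneg)))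
    ENNReal.zero_ne_top)
  have hterm (n : ℕ) : (Fintype.card σ : ℝ≥0∞) ^ n * (2 * p ^ n) ^ (t : ℝ) =
      2 ^ (t : ℝ) * (Fintype.card σ * p ^ (t : ℝ)) ^ n := by
    rw [ENNReal.mul_rpow_of_nonneg _ _ t.coe_nonneg, ← ENNReal.rpow_natCast_mul, mul_comm (n : ℝ),
      ENNReal.rpow_mul_natCast, mul_pow]
    ring
  rw [tsum_list_length fun n ↦ (2 * p ^ n) ^ (t : ℝ)]
  simp_rw [hterm]
  rw [ENNReal.tsum_mul_left, ENNReal.tsum_geometric]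
  exact ENNReal.mul_ne_top (ENNReal.rpow_ne_top_of_nonneg t.coe_nonneg ENNReal.ofNat_ne_top)
    (ENNReal.inv_ne_top.2 (tsub_pos_of_lt hp).ne')

theorem natCast_mul_radiusRatio_rpow_lt_one (b : ℕ) (hs : 0 < s) (hst : s < t) :
    b * radiusRatio b s ^ (t : ℝ) < 1 := by
  have hβ : (1 : ℝ≥0∞) < max 2 (b : ℝ≥0∞) := lt_max_of_lt_left ENNReal.one_lt_two
  have hβtop : max 2 (b : ℝ≥0∞) ≠ ∞ := by simp
  have hexp : 1 + -(s : ℝ)⁻¹ * t < 0 := by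
    have : (1 : ℝ) < (s : ℝ)⁻¹ * t := by
      rw [← div_eq_inv_mul]
      exact (one_lt_div (NNReal.coe_pos.2 hs)).2 hst
    linarith
  calc (b : ℝ≥0∞) * radiusRatio b s ^ (t : ℝ)
      ≤ max 2 (b : ℝ≥0∞) ^ (1 : ℝ) * max 2 (b : ℝ≥0∞) ^ (-(s : ℝ)⁻¹ * t) := by
        rw [radiusRatio, ← ENNReal.rpow_mul, ENNReal.rpow_one]
        gcongr
        exact le_max_right _ _
    _ = max 2 (b : ℝ≥0∞) ^ (1 + -(s : ℝ)⁻¹ * t) :=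
        (ENNReal.rpow_add _ _ (zero_lt_one.trans hβ).ne' hβtop).symm
    _ < 1 := ENNReal.rpow_lt_one_of_one_lt_of_neg hβ hexp

theorem ofReal_le_radiusRatio_pow {b n : ℕ} (hs : 0 < s) (hδ : δ ∈ Ioo 0 1)
    (hn : (n : ℝ≥0∞) ≤ s * ENNReal.ofReal (Real.logb b (1 / δ))) :
    ENNReal.ofReal δ ≤ radiusRatio b s ^ n := by
  set β : ℝ := max 2 b with hβ
  have hβ1 : 1 < β := lt_max_of_lt_left one_lt_two
  have hβ0 : 0 < β := zero_lt_one.trans hβ1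
  have hlog : Real.logb b (1 / δ) ≤ Real.logb β (1 / δ) := by
    obtain hb | hb := le_or_gt b 1
    · have : Real.logb b (1 / δ) = 0 := by interval_cases b <;> simp
      rw [this]
      exact Real.logb_nonneg hβ1 (one_le_one_div hδ.1 hδ.2.le)
    · rw [hβ, max_eq_right (by exact_mod_cast hb)]
  have hn' : n / (s : ℝ) ≤ Real.logb β (1 / δ) := by
    have := hn.trans (mul_le_mul_right (ENNReal.ofReal_le_ofReal hlog) _)
    rw [← ENNReal.ofReal_coe_nnreal, ← ENNReal.ofReal_mul s.coe_nonneg, ← ENNReal.ofReal_natCast,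
      ENNReal.ofReal_le_ofReal_iff (mul_nonneg s.coe_nonneg
        (Real.logb_nonneg hβ1 (one_le_one_div hδ.1 hδ.2.le)))] at this
    exact (div_le_iff₀' (NNReal.coe_pos.2 hs)).2 this
  have hδβ : δ ≤ β ^ (-(s : ℝ)⁻¹ * n) := by
    rw [neg_mul, ← div_eq_inv_mul, Real.rpow_neg hβ0.le, le_inv_comm₀ hδ.1 (by positivity),
      ← one_div]
    exact (Real.le_logb_iff_rpow_le hβ1 (one_div_pos.2 hδ.1)).1 hn'
  calc ENNReal.ofReal δ ≤ ENNReal.ofReal (β ^ (-(s : ℝ)⁻¹ * n)) := ENNReal.ofReal_le_ofReal hδβ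
    _ = radiusRatio b s ^ n := by
      rw [← ENNReal.ofReal_rpow_of_pos hβ0, ENNReal.rpow_mul_natCast, radiusRatio, hβ,
        ENNReal.ofReal_max]
      simp

theorem exists_length_eq_Kfst {σ : Type} {T : FST σ} {w : List σ} (h : Kfst T w ≠ ⊤) :
    ∃ π : List σ, T.out π = w ∧ (π.length : ℕ∞) = Kfst T w := by
  have hne : {k : ℕ∞ | ∃ π : List σ, T.out π = w ∧ (π.length : ℕ∞) = k}.Nonempty :=
    nonempty_iff_ne_empty.2 fun hempty ↦ h (by rw [Kfst, hempty, sInf_empty])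
  exact csInf_mem hne

theorem exists_length_eq_KprecF {σ : Type} {T : FST σ} {f : List σ → ℝ}
    (h : KprecF T f δ x ≠ ⊤) :
    ∃ π : List σ, |f (T.out π) - x| < δ ∧ (π.length : ℕ∞) = KprecF T f δ x := by
  have hne : {k : ℕ∞ | ∃ w : List σ, |f w - x| < δ ∧ Kfst T w = k}.Nonempty :=
    nonempty_iff_ne_empty.2 fun hempty ↦ h (by rw [KprecF, hempty, sInf_empty])
  obtain ⟨w, hw, hK⟩ : ∃ w, |f w - x| < δ ∧ Kfst T w = KprecF T f δ x := csInf_mem hne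
  obtain ⟨π, rfl, hπ⟩ := exists_length_eq_Kfst (hK.trans_ne h)
  exact ⟨π, hw, hπ.trans hK⟩

theorem frequently_exists_length_le (h : dimFSfVia T f x < s) :
    ∃ᶠ δ in 𝓝[>] (0 : ℝ), ∃ π : List σ, |f (T.out π) - x| < δ ∧
      (π.length : ℝ≥0∞) ≤ s * ENNReal.ofReal (Real.logb (Fintype.card σ) (1 / δ)) := by
  refine (frequently_lt_of_liminf_lt (by isBoundedDefault) h).mono fun δ hδ ↦ ?_
  have hK : KprecF T f δ x ≠ ⊤ := fun htop ↦ by simp [htop, ENNReal.top_div] at hδ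
  obtain ⟨π, hπ, hlength⟩ := exists_length_eq_KprecF hK
  refine ⟨π, hπ, ?_⟩
  rw [← hlength, ENat.toENNReal_coe] at hδ
  exact (ENNReal.div_le_iff_le_mul (.inr ENNReal.coe_ne_top) (.inl ENNReal.ofReal_ne_top)).1 hδ.le

theorem frequently_mem_eball_of_dimFSfVia_lt (hs : 0 < s) (hx : x ∉ range (f ∘ T.out))
    (h : dimFSfVia T f x < s) :
    ∃ᶠ π in cofinite, x ∈ eball (f (T.out π)) (radiusRatio (Fintype.card σ) s ^ π.length) := by
  -- Otherwise some precision `δ` is finer than the distance from `x` to all these centres.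
  rw [frequently_cofinite_iff_infinite]
  intro hfin
  have hfar : ∀ᶠ δ in 𝓝[>] (0 : ℝ), ∀ π ∈ {π | x ∈ eball (f (T.out π))
      (radiusRatio (Fintype.card σ) s ^ π.length)}, δ < |f (T.out π) - x| := by
    refine (eventually_all_finite hfin).2 fun π _ ↦
      eventually_nhdsWithin_of_eventually_nhds (eventually_lt_nhds ?_)
    exact abs_pos.2 (sub_ne_zero.2 fun hπ ↦ hx ⟨π, hπ⟩)
  have hunit : ∀ᶠ δ in 𝓝[>] (0 : ℝ), δ ∈ Ioo 0 1 := Ioo_mem_nhdsGT one_pos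
  obtain ⟨δ, ⟨π, hπ, hlength⟩, hδfar, hδ⟩ :=
    ((frequently_exists_length_le h).and_eventually (hfar.and hunit)).exists
  refine (hδfar π ?_).not_gt hπ
  calc edist x (f (T.out π)) < ENNReal.ofReal δ := by
        rwa [edist_comm, edist_dist, Real.dist_eq, ENNReal.ofReal_lt_ofReal_iff hδ.1]
    _ ≤ _ := ofReal_le_radiusRatio_pow hs hδ hlength

theorem dimH_le_of_forall_dimFSfVia_lt {A : Set ℝ} (hs : 0 < s) (hst : s < t)
    (hA : ∀ x ∈ A, dimFSfVia T f x < s) : dimH A ≤ t := by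
  set S := limsup (fun π ↦
    eball (f (T.out π)) (radiusRatio (Fintype.card σ) s ^ π.length)) cofinite
  have hsub : A ⊆ range (f ∘ T.out) ∪ S := fun x hx ↦ or_iff_not_imp_left.2 fun hxT ↦
    mem_limsup_iff_frequently_mem.2 (frequently_mem_eball_of_dimFSfVia_lt hs hxT (hA x hx))
  calc dimH A ≤ dimH (range (f ∘ T.out) ∪ S) := dimH_mono hsub
    _ = dimH S := by rw [dimH_union, (countable_range _).dimH_zero, zero_max]
    _ ≤ t := dimH_limsup_eball_pow_length_le _ (hs.trans hst)
      (natCast_mul_radiusRatio_rpow_lt_one _ hs hst)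

theorem dimH_le_dimFSfSet (f : List σ → ℝ) (A : Set ℝ) : dimH A ≤ dimFSfSet f A := by
  refine le_iInf fun T ↦ le_of_forall_gt_imp_ge_of_dense fun a ha ↦ ?_
  obtain ⟨t, ht, hta⟩ := ENNReal.lt_iff_exists_nnreal_btwn.1 ha
  obtain ⟨s, hs, hst⟩ := ENNReal.lt_iff_exists_nnreal_btwn.1 ht
  have hA (x) (hx : x ∈ A) : dimFSfVia T f x < s :=
    (le_iSup₂ (f := fun x (_ : x ∈ A) ↦ dimFSfVia T f x) x hx).trans_lt hs
  exact (dimH_le_of_forall_dimFSfVia_lt (by exact_mod_cast pos_of_gt hs)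
    (by exact_mod_cast hst) hA).trans hta.le

end LowerBound

section UpperBound

/-- The one-state transducer that copies its input. It suffices for the upper bound, since all the
compression can be built into the enumerator. -/
def FST.identity (σ : Type) : FST σ := ⟨1, fun q _ ↦ q, fun _ a ↦ [a], 0⟩

variable {σ : Type} {f : List σ → ℝ} {x : ℝ}

theorem FST.identity_out (w : List σ) : (FST.identity σ).out w = w := by
  have hnuS (q) : (FST.identity σ).nuS q w = w := by
    induction w with
    | nil => rfl
    | cons a w ih => exact congrArg (a :: ·) ih
  exact hnuS _

theorem KprecF_identity_le {δ : ℝ} {w : List σ} (h : |f w - x| < δ) :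
    KprecF (FST.identity σ) f δ x ≤ w.length :=
  (sInf_le ⟨w, h, rfl⟩ : KprecF _ f δ x ≤ Kfst _ w).trans
    (sInf_le ⟨w, FST.identity_out w, rfl⟩)

theorem inv_pow_ceil_logb_le {b : ℕ} (hb : 1 < b) {r : ℝ≥0} (hr : 0 < r) (s : ℝ≥0) :
    (b : ℝ≥0∞)⁻¹ ^ ⌈s * Real.logb b (1 / r)⌉₊ ≤ (r : ℝ≥0∞) ^ (s : ℝ) := by
  have hb' : (1 : ℝ) < b := by exact_mod_cast hb
  have hrb : (b : ℝ)⁻¹ ^ Real.logb b (1 / r) = r := by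
    rw [Real.inv_rpow b.cast_nonneg, Real.rpow_logb (zero_lt_one.trans hb') hb'.ne' (by positivity),
      one_div, inv_inv]
  have hrb' : (b : ℝ≥0∞)⁻¹ ^ Real.logb b (1 / r) = r := by
    rw [← ENNReal.ofReal_natCast, ← ENNReal.ofReal_inv_of_pos (by positivity),
      ENNReal.ofReal_rpow_of_pos (by positivity), hrb, ENNReal.ofReal_coe_nnreal]
  calc (b : ℝ≥0∞)⁻¹ ^ ⌈s * Real.logb b (1 / r)⌉₊
      = (b : ℝ≥0∞)⁻¹ ^ (⌈s * Real.logb b (1 / r)⌉₊ : ℝ) := (ENNReal.rpow_natCast _ _).symm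
    _ ≤ (b : ℝ≥0∞)⁻¹ ^ (Real.logb b (1 / r) * s) := by
      refine ENNReal.rpow_le_rpow_of_exponent_ge (ENNReal.inv_le_one.2 ?_) ?_
      · exact_mod_cast hb.le
      · rw [mul_comm]
        exact Nat.le_ceil _
    _ = (r : ℝ≥0∞) ^ (s : ℝ) := by rw [ENNReal.rpow_mul, hrb']

theorem natCast_ceil_mul_add_one_div_le (s : ℝ≥0) {a : ℝ} (ha : 0 < a) :
    ((⌈s * a⌉₊ + 1 : ℕ) : ℝ≥0∞) / ENNReal.ofReal a ≤ s + 2 / ENNReal.ofReal a := by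
  have hceil : ((⌈s * a⌉₊ + 1 : ℕ) : ℝ) ≤ s * a + 2 := by
    push_cast
    linarith [Nat.ceil_lt_add_one (mul_nonneg s.coe_nonneg ha.le)]
  have hceil' : ((⌈s * a⌉₊ + 1 : ℕ) : ℝ≥0∞) ≤ s * ENNReal.ofReal a + 2 :=
    calc ((⌈s * a⌉₊ + 1 : ℕ) : ℝ≥0∞) = ENNReal.ofReal (⌈s * a⌉₊ + 1 : ℕ) :=
          (ENNReal.ofReal_natCast _).symm
      _ ≤ ENNReal.ofReal (s * a + 2) := ENNReal.ofReal_le_ofReal hceil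
      _ = s * ENNReal.ofReal a + 2 := by
        rw [ENNReal.ofReal_add (by positivity) zero_le_two, ENNReal.ofReal_mul s.coe_nonneg,
          ENNReal.ofReal_coe_nnreal, ENNReal.ofReal_ofNat]
  calc ((⌈s * a⌉₊ + 1 : ℕ) : ℝ≥0∞) / ENNReal.ofReal a
      ≤ (s * ENNReal.ofReal a + 2) / ENNReal.ofReal a := by gcongr
    _ = s + 2 / ENNReal.ofReal a := by
      rw [ENNReal.add_div, ENNReal.mul_div_cancel_right (ENNReal.ofReal_pos.2 ha).ne'
        ENNReal.ofReal_ne_top]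

variable [Fintype σ] [Nontrivial σ]

theorem dimFSfVia_identity_le {s r : ℕ → ℝ≥0} {d : ℝ≥0∞} {w : ℕ → List σ}
    (hs : Tendsto (fun k ↦ (s k : ℝ≥0∞)) atTop (𝓝 d)) (hr : Tendsto r atTop (𝓝[>] 0))
    (hw : ∀ k, |f (w k) - x| < r k)
    (hlength : ∀ k, (w k).length = ⌈s k * Real.logb (Fintype.card σ) (1 / r k)⌉₊ + 1) :
    dimFSfVia (FST.identity σ) f x ≤ d := by
  set a : ℕ → ℝ := fun k ↦ Real.logb (Fintype.card σ) (1 / r k)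
  have hr' : Tendsto (fun k ↦ (r k : ℝ)) atTop (𝓝[>] 0) := by
    rw [tendsto_nhdsWithin_iff] at hr ⊢
    exact ⟨NNReal.tendsto_coe.2 hr.1, hr.2⟩
  have ha : Tendsto a atTop atTop := by
    simp only [a, one_div]
    exact (Real.tendsto_logb_atTop (by exact_mod_cast Fintype.one_lt_card)).comp
      (tendsto_inv_nhdsGT_zero.comp hr')
  have hsum : Tendsto (fun k ↦ s k + 2 / ENNReal.ofReal (a k)) atTop (𝓝 d) := by
    have hzero := ENNReal.Tendsto.const_div (ENNReal.tendsto_ofReal_nhds_top.2 ha)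
      (.inr (ENNReal.ofNat_ne_top (n := 2)))
    simpa only [ENNReal.div_top, add_zero] using hs.add hzero
  have hratio : ∀ᶠ k in atTop, (KprecF (FST.identity σ) f (r k) x : ℝ≥0∞) / ENNReal.ofReal (a k) ≤
      s k + 2 / ENNReal.ofReal (a k) := by
    filter_upwards [ha.eventually_gt_atTop 0] with k hk
    refine le_trans ?_ (natCast_ceil_mul_add_one_div_le (s k) hk)
    rw [← hlength k]
    gcongr
    exact_mod_cast KprecF_identity_le (hw k)
  calc dimFSfVia (FST.identity σ) f x
      ≤ liminf (fun k ↦ (KprecF (FST.identity σ) f (r k) x : ℝ≥0∞) / ENNReal.ofReal (a k)) atTop :=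
        liminf_le_liminf_of_le hr'
    _ ≤ liminf (fun k ↦ s k + 2 / ENNReal.ofReal (a k)) atTop := liminf_le_liminf hratio
    _ = d := hsum.liminf_eq

theorem exists_range_eq_dimFSfSet_le {g : List σ → ℝ} {A : Set ℝ} (hA : A ⊆ closure (range g)) :
    ∃ f : List σ → ℝ, range f = range g ∧ dimFSfSet f A ≤ dimH A := by
  have hfin : dimH A ≠ ∞ :=
    ne_top_of_le_ne_top ENNReal.one_ne_top ((dimH_mono (subset_univ A)).trans Real.dimH_univ.le)
  obtain ⟨s, c, r, hs, hr, hsum, hcover⟩ := exists_fine_ball_covers hA hfin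
  have hkraft : ∑' i : ℕ × ℕ, (Fintype.card σ : ℝ≥0∞)⁻¹ ^
      ⌈s i.1 * Real.logb (Fintype.card σ) (1 / r i)⌉₊ ≤ 1 :=
    (ENNReal.tsum_le_tsum fun i ↦
      inv_pow_ceil_logb_le Fintype.one_lt_card (hr i).1 (s i.1)).trans hsum
  obtain ⟨φ, hφ, hcode⟩ := exists_surjective_apply_eq_of_kraft hkraft c
  choose w hw hlength using hcode
  refine ⟨g ∘ φ, hφ.range_comp g, iInf_le_of_le (FST.identity σ) (iSup₂_le fun x hx ↦ ?_)⟩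
  choose n hn using hcover x hx
  have hr0 : Tendsto (fun k ↦ r (k, n k)) atTop (𝓝[>] 0) := by
    refine tendsto_nhdsWithin_iff.2 ⟨ENNReal.tendsto_coe.1 ?_, .of_forall fun k ↦ (hr _).1⟩
    exact tendsto_of_tendsto_of_tendsto_of_le_of_le tendsto_const_nhds
      ENNReal.tendsto_inv_nat_nhds_zero (fun _ ↦ zero_le) fun k ↦ (hr (k, n k)).2.le
  refine dimFSfVia_identity_le (w := fun k ↦ w (k, n k)) hs hr0 (fun k ↦ ?_) fun k ↦ hlength _
  rw [Function.comp_apply, hw, ← Real.dist_eq, ← coe_nndist, NNReal.coe_lt_coe, ← edist_lt_coe]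
  exact hn k

end UpperBound

section Realb

theorem realb_cons {b : ℕ} (a : Fin b) (w : List (Fin b)) :
    realb b (a :: w) = (a + realb b w) / b := by
  simp only [realb, List.length_cons]
  rw [Fin.sum_univ_succ, add_div, Finset.sum_div]
  simp [pow_succ, div_div]

theorem realb_mem_Ico {b : ℕ} (w : List (Fin b)) : realb b w ∈ Ico (0 : ℝ) 1 := by
  induction w with
  | nil => simp [realb]
  | cons a w ih =>
    have ha : (a + 1 : ℝ) ≤ b := by exact_mod_cast a.isLt
    have hb : (0 : ℝ) < b := by positivity [a.pos]
    rw [realb_cons]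
    exact ⟨by have := ih.1; positivity, by rw [div_lt_one hb]; linarith [ih.2]⟩

theorem realb_pre {b : ℕ} (S : ℕ → Fin b) (n : ℕ) :
    realb b (pre S n) = ∑ i ∈ Finset.range n, Real.ofDigitsTerm S i := by
  rw [← Fin.sum_univ_eq_sum_range]
  refine Fintype.sum_equiv (finCongr List.length_ofFn) _ _ fun i ↦ ?_
  simp [pre, Real.ofDigitsTerm, div_eq_mul_inv]

theorem isSE_realb {b : ℕ} (hb : 1 < b) : isSE (realb b) := by
  have : NeZero b := ⟨by lia⟩
  refine ⟨realb_mem_Ico, fun y hy ↦ ?_⟩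
  have hIco : Ico (0 : ℝ) 1 ⊆ closure (range (realb b)) := fun x hx ↦
    mem_closure_of_tendsto (Real.hasSum_ofDigitsTerm_digits x hb hx).tendsto_sum_nat
      (.of_forall fun n ↦ ⟨pre (Real.digits x b) n, realb_pre _ n⟩)
  have hIcc := closure_minimal hIco isClosed_closure
  rw [closure_Ico zero_ne_one] at hIcc
  exact hIcc hy

theorem isSE_of_range_eq {σ τ : Type} {f : List σ → ℝ} {g : List τ → ℝ} (hg : isSE g)
    (h : range f = range g) : isSE f :=
  ⟨forall_mem_range.1 (h ▸ forall_mem_range.2 hg.1), h ▸ hg.2⟩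

end Realb

theorem pointToSet_dimH_eq_min_dimFSf_general (A : Set ℝ) :
    (∀ (σ : Type) [Fintype σ] (f : List σ → ℝ), dimH A ≤ dimFSfSet f A) ∧
    ∀ (σ : Type) [Fintype σ] [Nontrivial σ] (g : List σ → ℝ), A ⊆ closure (range g) →
      ∃ f : List σ → ℝ, range f = range g ∧ dimFSfSet f A = dimH A := by
  refine ⟨fun σ _ f ↦ dimH_le_dimFSfSet f A, fun σ _ _ g hg ↦ ?_⟩
  obtain ⟨f, hf, hle⟩ := exists_range_eq_dimFSfSet_le hg
  exact ⟨f, hf, hle.antisymm (dimH_le_dimFSfSet f A)⟩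

/-- point-to-set principle: dim_H(A) = min over SEs f of dim_FS^f(A),
attained by some f into the dyadic rationals. -/
theorem pointToSet_dimH_eq_min_dimFSf (A : Set ℝ) (hA : A ⊆ Set.Ico (0:ℝ) 1) :
    (∀ (σ : Type) [Fintype σ] (f : List σ → ℝ), isSE f → dimH A ≤ dimFSfSet f A) ∧
    (∃ f : List (Fin 2) → ℝ, isSE f ∧ (∀ w, f w ∈ Set.range (realb 2)) ∧
      dimFSfSet f A = dimH A) := by
  have hbinary : isSE (realb 2) := isSE_realb one_lt_two
  obtain ⟨hle, hattained⟩ := pointToSet_dimH_eq_min_dimFSf_general A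
  obtain ⟨f, hf, hdim⟩ :=
    hattained (Fin 2) (realb 2) fun x hx ↦ hbinary.2 x (Ico_subset_Icc_self (hA hx))
  exact ⟨fun σ _ f _ ↦ hle σ f, f, isSE_of_range_eq hbinary hf, fun w ↦ hf ▸ mem_range_self w, hdim⟩
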